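/- (Consequence of Proposition 1: discrete maximum principle.) Under the hypotheses of the structure part of Proposition 1 (tensor-product rectangular grid with positive widths w_x and heights w_y, α > 0, constant β = (b₁,b₂), γ̄ > 0 elementwise, and edge stabilization values ρ_e ≥ max(Pe_e − 1, 0)), the stabilized MFV stiffness matrix K is invertible and all entries of K⁻¹ are nonnegative; in particular, if K u = g with g entrywise nonnegative, then u is entrywise nonnegative, irrespective of the convective term and of the mesh size. -/

import Mathlib

open Finset

/-- Distance `d_e` associated with the grid line at index `k ∈ {0, …, m}` of a 1D
partition with `m` element widths `w 0, …, w (m-1)`: half the first (resp. last) element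
width for the boundary lines `k = 0` (resp. `k = m`), and the average
`(w (k-1) + w k)/2` of the two adjacent element widths for interior lines. -/
noncomputable def dEdge (w : ℕ → ℝ) (m k : ℕ) : ℝ :=
  if k = 0 then w 0 / 2
  else if k = m then w (m - 1) / 2
  else (w (k - 1) + w k) / 2

/-- The stiffness matrix of the stabilized dual mixed-finite volume (MFV) scheme on an
`m × n` tensor-product rectangular grid with element widths `wx` and heights `wy`,
diffusion coefficient `α`, constant convective field `β = (b₁, b₂)`, elementwise mean
reaction coefficients `γ`, and artificial viscosities `ρv k j` (on the vertical edge
lying on grid line `k ∈ {0, …, m}` in row `j`) and `ρh k i` (on the horizontal edge lying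
on grid line `k ∈ {0, …, n}` in column `i`). -/
noncomputable def mfvMatrix (m n : ℕ) (α b₁ b₂ : ℝ) (wx wy : ℕ → ℝ)
    (γ ρv ρh : ℕ → ℕ → ℝ) :
    Matrix (Fin m × Fin n) (Fin m × Fin n) ℝ := fun p q =>
  let i : ℕ := p.1
  let j : ℕ := p.2
  let dv : ℕ → ℝ := dEdge wx m
  let dh : ℕ → ℝ := dEdge wy n
  if p = q then
    (α * (1 + ρv i j) / dv i + (-b₁) / 2) * wy j
      + (α * (1 + ρv (i + 1) j) / dv (i + 1) + b₁ / 2) * wy j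
      + (α * (1 + ρh j i) / dh j + (-b₂) / 2) * wx i
      + (α * (1 + ρh (j + 1) i) / dh (j + 1) + b₂ / 2) * wx i
      + γ i j * (wx i * wy j)
  else if p.2 = q.2 ∧ (q.1 : ℕ) = i + 1 then
    (-(α * (1 + ρv (i + 1) j)) / dv (i + 1) + b₁ / 2) * wy j
  else if p.2 = q.2 ∧ i = (q.1 : ℕ) + 1 then
    (-(α * (1 + ρv i j)) / dv i - b₁ / 2) * wy j
  else if p.1 = q.1 ∧ (q.2 : ℕ) = j + 1 then
    (-(α * (1 + ρh (j + 1) i)) / dh (j + 1) + b₂ / 2) * wx i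
  else if p.1 = q.1 ∧ j = (q.2 : ℕ) + 1 then
    (-(α * (1 + ρh j i)) / dh j - b₂ / 2) * wx i
  else 0

theorem dEdge_pos_aux (w : ℕ → ℝ) (m k : ℕ) (hm : 1 ≤ m) (hw : ∀ i < m, 0 < w i)
    (hk : k ≤ m) : 0 < dEdge w m k := by
  unfold dEdge
  split_ifs with h1 h2
  · have := hw 0 (by omega)
    linarith
  · have := hw (m - 1) (by omega)
    linarith
  · have := hw (k - 1) (by omega)
    have := hw k (by omega)
    linarith

theorem edge_bound_aux (α b d ρ : ℝ) (hα : 0 < α) (hd : 0 < d)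
    (h : max (|b| * d / (2 * α) - 1) 0 ≤ ρ) : |b| / 2 ≤ α * (1 + ρ) / d := by
  have h1 : |b| * d / (2 * α) ≤ 1 + ρ := by
    have := le_trans (le_max_left _ _) h
    linarith
  rw [div_le_iff₀ (by positivity)] at h1
  rw [le_div_iff₀ hd]
  linarith

theorem sum_ite_aux {ι : Type*} [Fintype ι] (P : ι → Prop) [DecidablePred P] (R : ℝ)
    (hR : R ≤ 0) (hP : ∀ x y, P x → P y → x = y) :
    R ≤ ∑ q, if P q then R else 0 := by
  by_cases h : ∃ x, P x
  · obtain ⟨x, hx⟩ := h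
    rw [Finset.sum_eq_single x]
    · simp [hx]
    · intro y _ hy
      rw [if_neg]
      exact fun h => hy (hP _ _ h hx)
    · simp
  · push Not at h
    simp [h, hR]

theorem mono_aux {ι : Type*} [Fintype ι] (K : Matrix ι ι ℝ)
    (hoff : ∀ p q, p ≠ q → K p q ≤ 0) (hrow : ∀ p, 0 < ∑ q, K p q)
    (u : ι → ℝ) (hu : ∀ p, 0 ≤ K.mulVec u p) : ∀ p, 0 ≤ u p := by
  intro p0
  haveI : Nonempty ι := ⟨p0⟩
  obtain ⟨p, hp⟩ := Finite.exists_min u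
  refine le_trans ?_ (hp p0)
  by_contra hneg
  push Not at hneg
  have h1 : K.mulVec u p ≤ (∑ q, K p q) * u p := by
    rw [Finset.sum_mul]
    apply Finset.sum_le_sum
    intro q _
    by_cases hq : p = q
    · rw [hq]
    · exact mul_le_mul_of_nonpos_left (hp q) (hoff p q hq)
  have h2 := mul_neg_of_pos_of_neg (hrow p) hneg
  linarith [hu p]

theorem mmatrix_aux {ι : Type*} [Fintype ι] [DecidableEq ι] (K : Matrix ι ι ℝ)
    (hoff : ∀ p q, p ≠ q → K p q ≤ 0) (hrow : ∀ p, 0 < ∑ q, K p q) :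
    IsUnit K ∧ (∀ p q, 0 ≤ K⁻¹ p q) ∧
    (∀ u g : ι → ℝ, K.mulVec u = g → (∀ p, 0 ≤ g p) → ∀ p, 0 ≤ u p) := by
  have hmono := mono_aux K hoff hrow
  have hK : IsUnit K := by
    rw [← Matrix.mulVec_injective_iff_isUnit]
    intro x y hxy
    have hxy : K.mulVec x = K.mulVec y := hxy
    have h1 := hmono (x - y) (by intro p; rw [Matrix.mulVec_sub, hxy]; simp)
    have h2 := hmono (y - x) (by intro p; rw [Matrix.mulVec_sub, hxy]; simp)
    funext p
    have a := h1 p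
    have b := h2 p
    simp only [Pi.sub_apply] at a b
    linarith
  refine ⟨hK, ?_, ?_⟩
  · intro p q
    refine hmono (fun r => K⁻¹ r q) ?_ p
    intro r
    have h : K.mulVec (fun r => K⁻¹ r q) r = (K * K⁻¹) r q := rfl
    rw [h, Matrix.mul_nonsing_inv K ((Matrix.isUnit_iff_isUnit_det K).1 hK), Matrix.one_apply]
    split_ifs <;> norm_num
  · rintro u g rfl hg
    exact hmono u hg

/-- consequence of Proposition 1: discrete maximum principle. Under the
hypotheses of the structure part of Proposition 1, the stabilized MFV stiffness matrix
`K` is invertible and all entries of `K⁻¹` are nonnegative; in particular, if `K u = g`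
with `g` entrywise nonnegative, then `u` is entrywise nonnegative, irrespective of the
convective term and of the mesh size. -/
theorem mfvMatrix_discrete_maximum_principle (m n : ℕ) (hm : 1 ≤ m) (hn : 1 ≤ n)
    (α b₁ b₂ : ℝ) (hα : 0 < α)
    (wx wy : ℕ → ℝ) (hwx : ∀ i < m, 0 < wx i) (hwy : ∀ j < n, 0 < wy j)
    (γ : ℕ → ℕ → ℝ) (hγ : ∀ i < m, ∀ j < n, 0 < γ i j)
    (ρv ρh : ℕ → ℕ → ℝ)
    (hρv : ∀ k ≤ m, ∀ j < n, max (|b₁| * dEdge wx m k / (2 * α) - 1) 0 ≤ ρv k j)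
    (hρh : ∀ k ≤ n, ∀ i < m, max (|b₂| * dEdge wy n k / (2 * α) - 1) 0 ≤ ρh k i) :
    IsUnit (mfvMatrix m n α b₁ b₂ wx wy γ ρv ρh) ∧
    (∀ p q, 0 ≤ (mfvMatrix m n α b₁ b₂ wx wy γ ρv ρh)⁻¹ p q) ∧
    (∀ u g : Fin m × Fin n → ℝ,
      (mfvMatrix m n α b₁ b₂ wx wy γ ρv ρh).mulVec u = g →
      (∀ p, 0 ≤ g p) → ∀ p, 0 ≤ u p) := by
  have hb : ∀ b A : ℝ, |b| / 2 ≤ A → -A + b / 2 ≤ 0 ∧ -A - b / 2 ≤ 0 := by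
    intro b A h
    have := le_abs_self b
    have := neg_abs_le b
    constructor <;> linarith
  have hv : ∀ k ≤ m, ∀ j < n, |b₁| / 2 ≤ α * (1 + ρv k j) / dEdge wx m k := fun k hk j hj =>
    edge_bound_aux _ _ _ _ hα (dEdge_pos_aux wx m k hm hwx hk) (hρv k hk j hj)
  have hh : ∀ k ≤ n, ∀ i < m, |b₂| / 2 ≤ α * (1 + ρh k i) / dEdge wy n k := fun k hk j hj =>
    edge_bound_aux _ _ _ _ hα (dEdge_pos_aux wy n k hn hwy hk) (hρh k hk j hj)
  have hR : ∀ (i : Fin m) (j : Fin n),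
      (-(α * (1 + ρv (i + 1) j)) / dEdge wx m (i + 1) + b₁ / 2) * wy j ≤ 0 := fun i j => by
    rw [neg_div]
    exact mul_nonpos_of_nonpos_of_nonneg (hb _ _ (hv (i + 1) i.2 j j.2)).1 (hwy j j.2).le
  have hL : ∀ (i : Fin m) (j : Fin n),
      (-(α * (1 + ρv i j)) / dEdge wx m i - b₁ / 2) * wy j ≤ 0 := fun i j => by
    rw [neg_div]
    exact mul_nonpos_of_nonpos_of_nonneg (hb _ _ (hv i i.2.le j j.2)).2 (hwy j j.2).le
  have hU : ∀ (i : Fin m) (j : Fin n),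
      (-(α * (1 + ρh (j + 1) i)) / dEdge wy n (j + 1) + b₂ / 2) * wx i ≤ 0 := fun i j => by
    rw [neg_div]
    exact mul_nonpos_of_nonpos_of_nonneg (hb _ _ (hh (j + 1) j.2 i i.2)).1 (hwx i i.2).le
  have hD : ∀ (i : Fin m) (j : Fin n),
      (-(α * (1 + ρh j i)) / dEdge wy n j - b₂ / 2) * wx i ≤ 0 := fun i j => by
    rw [neg_div]
    exact mul_nonpos_of_nonpos_of_nonneg (hb _ _ (hh j j.2.le i i.2)).2 (hwx i i.2).le
  apply mmatrix_aux
  · intro p q hpq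
    unfold mfvMatrix
    simp only [if_neg hpq]
    split_ifs
    · exact hR _ _
    · exact hL _ _
    · exact hU _ _
    · exact hD _ _
    · exact le_rfl
  · rintro ⟨i, j⟩
    have hR := hR i j
    have hL := hL i j
    have hU := hU i j
    have hD := hD i j
    have hG : 0 < γ i j * (wx i * wy j) :=
      mul_pos (hγ i i.2 j j.2) (mul_pos (hwx i i.2) (hwy j j.2))
    have sR := sum_ite_aux (fun q : Fin m × Fin n => j = q.2 ∧ (q.1 : ℕ) = i + 1) _ hR
      (by rintro ⟨a, b⟩ ⟨c, d⟩ h1 h2; simp only [Prod.mk.injEq, Fin.ext_iff] at *; omega)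
    have sL := sum_ite_aux (fun q : Fin m × Fin n => j = q.2 ∧ (i : ℕ) = q.1 + 1) _ hL
      (by rintro ⟨a, b⟩ ⟨c, d⟩ h1 h2; simp only [Prod.mk.injEq, Fin.ext_iff] at *; omega)
    have sU := sum_ite_aux (fun q : Fin m × Fin n => i = q.1 ∧ (q.2 : ℕ) = j + 1) _ hU
      (by rintro ⟨a, b⟩ ⟨c, d⟩ h1 h2; simp only [Prod.mk.injEq, Fin.ext_iff] at *; omega)
    have sD := sum_ite_aux (fun q : Fin m × Fin n => i = q.1 ∧ (j : ℕ) = q.2 + 1) _ hD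
      (by rintro ⟨a, b⟩ ⟨c, d⟩ h1 h2; simp only [Prod.mk.injEq, Fin.ext_iff] at *; omega)
    have sP : ∑ q : Fin m × Fin n, (if (i, j) = q then
        mfvMatrix m n α b₁ b₂ wx wy γ ρv ρh (i, j) (i, j) else 0)
        = mfvMatrix m n α b₁ b₂ wx wy γ ρv ρh (i, j) (i, j) := by
      simp
    have key := Finset.sum_le_sum (s := Finset.univ) (fun (q : Fin m × Fin n) _ =>
      show (if (i, j) = q then mfvMatrix m n α b₁ b₂ wx wy γ ρv ρh (i, j) (i, j) else 0)
        + (if j = q.2 ∧ (q.1 : ℕ) = i + 1 then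
          (-(α * (1 + ρv (i + 1) j)) / dEdge wx m (i + 1) + b₁ / 2) * wy j else 0)
        + (if j = q.2 ∧ (i : ℕ) = q.1 + 1 then
          (-(α * (1 + ρv i j)) / dEdge wx m i - b₁ / 2) * wy j else 0)
        + (if i = q.1 ∧ (q.2 : ℕ) = j + 1 then
          (-(α * (1 + ρh (j + 1) i)) / dEdge wy n (j + 1) + b₂ / 2) * wx i else 0)
        + (if i = q.1 ∧ (j : ℕ) = q.2 + 1 then
          (-(α * (1 + ρh j i)) / dEdge wy n j - b₂ / 2) * wx i else 0)
        ≤ mfvMatrix m n α b₁ b₂ wx wy γ ρv ρh (i, j) q by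
      by_cases hq : (i, j) = q
      · rw [if_pos hq, ← hq]
        split_ifs <;> linarith
      · rw [if_neg hq]
        unfold mfvMatrix
        simp only [if_neg hq]
        split_ifs <;> linarith)
    simp only [Finset.sum_add_distrib] at key
    rw [sP] at key
    have hdiag : mfvMatrix m n α b₁ b₂ wx wy γ ρv ρh (i, j) (i, j) =
      (α * (1 + ρv i j) / dEdge wx m i + (-b₁) / 2) * wy j
      + (α * (1 + ρv (i + 1) j) / dEdge wx m (i + 1) + b₁ / 2) * wy j
      + (α * (1 + ρh j i) / dEdge wy n j + (-b₂) / 2) * wx i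
      + (α * (1 + ρh (j + 1) i) / dEdge wy n (j + 1) + b₂ / 2) * wx i
      + γ i j * (wx i * wy j) := by
      simp [mfvMatrix]
    rw [hdiag] at key
    refine lt_of_lt_of_le hG (le_trans ?_ key)
    refine le_trans (le_of_eq ?_) (add_le_add (add_le_add (add_le_add (add_le_add le_rfl sR) sL) sU) sD)
    ring
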